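/- arXiv:2110.03954 — 2 statements merged into one kernel-verified Lean document; each statement's English description precedes it below -/
import Mathlib

section
/- On ℝ³ with coordinates (t,u,p), consider the 10 smooth vector fields: ∂_t; ∂_u; t∂_t − p∂_p; t∂_u + ∂_p; t²∂_u + 2t∂_p; u∂_u + p∂_p; 2p∂_t + p²∂_u; t²∂_t + 2tu∂_u + 2u∂_p; (2tp − 2u)∂_t + tp²∂_u + p²∂_p; and (2t²p − 4tu)∂_t + (t²p² − 4u²)∂_u + (2tp² − 4up)∂_p. These vector fields are linearly independent over ℝ and their real span is closed under the Lie bracket of vector fields; hence they span a 10-dimensional Lie subalgebra of the Lie algebra of smooth vector fields on ℝ³. -/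
/-- The Lie bracket of vector fields on a real normed space:
`[X,Y](p) = DY(p)(X(p)) − DX(p)(Y(p))`. -/
noncomputable def vbracket {E : Type*} [NormedAddCommGroup E] [NormedSpace ℝ E]
    (X Y : E → E) : E → E :=
  fun p => fderiv ℝ Y p (X p) - fderiv ℝ X p (Y p)

/-!
A symmetry `X` of the contact distribution `du = p dt` is determined by its generating function
`f = (du - p dt)(X)`, and the Lie bracket of fields becomes the Lagrange bracket of generating
functions. The generating functions of the ten fields span the products of pairs of the four
functions `1, t, p, 2u - tp`. The Lagrange bracket of two products is a Leibniz-type expression in a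
bilinear bracket of the factors, and on these four functions that bracket takes constant values: it
is a symplectic form on `ℝ⁴`. So the span of the products is closed under the Lagrange bracket, and
the ten fields form a copy of `𝔰𝔭(4, ℝ) = S²(ℝ⁴)`.
-/

open MvPolynomial

section PolynomialVectorFields

variable {σ R : Type*} [CommRing R]

/-- The vector field on `σ → R` with polynomial coefficients determined by a derivation `D` of the
polynomial ring: its `i`-th component is the polynomial function `D xᵢ`. -/
noncomputable def vectorFieldOfDerivation :
    Derivation R (MvPolynomial σ R) (MvPolynomial σ R) →ₗ[R] (σ → R) → σ → R where
  toFun D x i := eval x (D (X i))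
  map_add' D₁ D₂ := by ext; simp
  map_smul' c D := by ext; simp [smul_eval]

theorem vectorFieldOfDerivation_apply (D : Derivation R (MvPolynomial σ R) (MvPolynomial σ R))
    (x : σ → R) (i : σ) : vectorFieldOfDerivation D x i = eval x (D (X i)) := rfl

theorem vectorFieldOfDerivation_injective [IsDomain R] [Infinite R] :
    Function.Injective (vectorFieldOfDerivation (σ := σ) (R := R)) := fun _ _ h =>
  derivation_ext fun i => MvPolynomial.funext fun x => congrFun (congrFun h x) i

theorem differentiable_eval [Finite σ] (f : MvPolynomial σ ℝ) :
    Differentiable ℝ fun x : σ → ℝ => eval x f := by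
  cases nonempty_fintype σ
  induction f using MvPolynomial.induction_on with
  | C a => simp
  | add f g hf hg => simpa only [map_add] using hf.fun_add hg
  | mul_X f i hf => simpa only [map_mul, eval_X] using hf.fun_mul (differentiable_apply i)

theorem fderiv_eval_vectorFieldOfDerivation [Finite σ]
    (D : Derivation ℝ (MvPolynomial σ ℝ) (MvPolynomial σ ℝ)) (f : MvPolynomial σ ℝ) (x : σ → ℝ) :
    fderiv ℝ (fun y => eval y f) x (vectorFieldOfDerivation D x) = eval x (D f) := by
  cases nonempty_fintype σ
  induction f using MvPolynomial.induction_on with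
  | C a => simp
  | add f g hf hg =>
    simp only [map_add]
    rw [fderiv_fun_add (differentiable_eval f x) (differentiable_eval g x)]
    simp [hf, hg]
  | mul_X f i hf =>
    simp only [map_mul, eval_X, Derivation.leibniz]
    rw [fderiv_fun_mul (differentiable_eval f x) (differentiableAt_apply i x)]
    simp [hf, fderiv_apply, vectorFieldOfDerivation_apply]

theorem vbracket_vectorFieldOfDerivation [Fintype σ]
    (D₁ D₂ : Derivation ℝ (MvPolynomial σ ℝ) (MvPolynomial σ ℝ)) :
    vbracket (vectorFieldOfDerivation D₁) (vectorFieldOfDerivation D₂) =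
      vectorFieldOfDerivation ⁅D₁, D₂⁆ := by
  have fderiv_component (D D' : Derivation ℝ (MvPolynomial σ ℝ) (MvPolynomial σ ℝ))
      (x : σ → ℝ) (i : σ) :
      fderiv ℝ (vectorFieldOfDerivation D') x (vectorFieldOfDerivation D x) i =
        eval x (D (D' (X i))) := by
    rw [← fderiv_eval_vectorFieldOfDerivation]
    exact congrFun (DFunLike.congr_fun
      (fderiv_pi fun j => differentiable_eval (D' (X j)) x) (vectorFieldOfDerivation D x)) i
  ext x i
  simp [vbracket, fderiv_component, vectorFieldOfDerivation_apply, Derivation.commutator_apply]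

end PolynomialVectorFields

theorem pderiv_comm {σ R : Type*} [CommRing R] (i j : σ) (f : MvPolynomial σ R) :
    pderiv i (pderiv j f) = pderiv j (pderiv i f) := by
  have commutator_eq_zero : ⁅pderiv (R := R) i, pderiv (R := R) j⁆ = 0 := by
    classical
    refine derivation_ext fun k => ?_
    simp [Derivation.commutator_apply, pderiv_X, Pi.single_apply, apply_ite]
  simpa [Derivation.commutator_apply, sub_eq_zero] using DFunLike.congr_fun commutator_eq_zero f

theorem pderiv_ofNat {σ R : Type*} [CommSemiring R] (i : σ) (n : ℕ) [n.AtLeastTwo] :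
    pderiv i (ofNat(n) : MvPolynomial σ R) = 0 :=
  (pderiv i).map_natCast n

section ContactFields

variable (R : Type*) [CommRing R]

/-- The total derivative `D = ∂_t + p ∂_u`, which together with `∂_p` spans the contact
distribution `du = p dt`; the variables `X 0`, `X 1`, `X 2` stand for `t`, `u`, `p`. -/
noncomputable def totalDerivative :
    Derivation R (MvPolynomial (Fin 3) R) (MvPolynomial (Fin 3) R) :=
  pderiv 0 + (X 2 : MvPolynomial (Fin 3) R) • pderiv 1

/-- The contact vector field with generating function `f`, that is, the infinitesimal symmetry `X`
of the contact distribution with `(du - p dt)(X) = f`. -/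
noncomputable def contactDerivation :
    MvPolynomial (Fin 3) R →ₗ[R]
      Derivation R (MvPolynomial (Fin 3) R) (MvPolynomial (Fin 3) R) where
  toFun f := f • pderiv 1 - pderiv 2 f • totalDerivative R + totalDerivative R f • pderiv 2
  map_add' f g := by simp only [map_add]; module
  map_smul' c f := by simp only [Derivation.map_smul, smul_assoc, RingHom.id_apply]; module

/-- The Lagrange bracket of generating functions, by which they inherit the Lie bracket of contact
vector fields. -/
noncomputable def lagrangeBracket :
    MvPolynomial (Fin 3) R →ₗ[R] MvPolynomial (Fin 3) R →ₗ[R] MvPolynomial (Fin 3) R :=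
  LinearMap.mk₂ R
    (fun f g => f * pderiv 1 g - pderiv 1 f * g
      + totalDerivative R f * pderiv 2 g - pderiv 2 f * totalDerivative R g)
    (fun _ _ _ => by simp only [map_add]; ring)
    (fun _ _ _ => by simp only [Derivation.map_smul, smul_mul_assoc]; module)
    (fun _ _ _ => by simp only [map_add]; ring)
    (fun _ _ _ => by simp only [Derivation.map_smul, mul_smul_comm]; module)

/-- The counterpart of the Lagrange bracket for densities of half the weight of a generating
function, scaled by `2` to avoid denominators. -/
noncomputable def halfWeightBracket :
    MvPolynomial (Fin 3) R →ₗ[R] MvPolynomial (Fin 3) R →ₗ[R] MvPolynomial (Fin 3) R :=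
  LinearMap.mk₂ R
    (fun a b => a * pderiv 1 b - pderiv 1 a * b
      + 2 * (totalDerivative R a * pderiv 2 b - pderiv 2 a * totalDerivative R b))
    (fun _ _ _ => by simp only [map_add]; ring)
    (fun _ _ _ => by
      simp only [Derivation.map_smul, smul_mul_assoc, mul_sub, mul_smul_comm]; module)
    (fun _ _ _ => by simp only [map_add]; ring)
    (fun _ _ _ => by simp only [Derivation.map_smul, mul_smul_comm, mul_sub]; module)

variable {R}

theorem totalDerivative_apply (f : MvPolynomial (Fin 3) R) :
    totalDerivative R f = pderiv 0 f + X 2 * pderiv 1 f := by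
  simp [totalDerivative]

theorem contactDerivation_apply (f g : MvPolynomial (Fin 3) R) :
    contactDerivation R f g =
      f * pderiv 1 g - pderiv 2 f * totalDerivative R g + totalDerivative R f * pderiv 2 g := rfl

theorem lagrangeBracket_apply (f g : MvPolynomial (Fin 3) R) :
    lagrangeBracket R f g = f * pderiv 1 g - pderiv 1 f * g
      + totalDerivative R f * pderiv 2 g - pderiv 2 f * totalDerivative R g := rfl

theorem halfWeightBracket_apply (a b : MvPolynomial (Fin 3) R) :
    halfWeightBracket R a b = a * pderiv 1 b - pderiv 1 a * b
      + 2 * (totalDerivative R a * pderiv 2 b - pderiv 2 a * totalDerivative R b) := rfl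

theorem totalDerivative_X_two : totalDerivative R (X 2) = 0 := by
  simp [totalDerivative_apply, pderiv_X]

theorem pderiv_one_totalDerivative (f : MvPolynomial (Fin 3) R) :
    pderiv 1 (totalDerivative R f) = totalDerivative R (pderiv 1 f) := by
  simp [totalDerivative_apply, pderiv_X, pderiv_comm 1 0 f]

theorem pderiv_two_totalDerivative (f : MvPolynomial (Fin 3) R) :
    pderiv 2 (totalDerivative R f) = totalDerivative R (pderiv 2 f) + pderiv 1 f := by
  simp [totalDerivative_apply, pderiv_comm 2 0 f, pderiv_comm 2 1 f, add_assoc]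

theorem contactDerivation_X_zero (f : MvPolynomial (Fin 3) R) :
    contactDerivation R f (X 0) = -pderiv 2 f := by
  simp [contactDerivation_apply, totalDerivative_apply, pderiv_X]

theorem contactDerivation_X_one (f : MvPolynomial (Fin 3) R) :
    contactDerivation R f (X 1) = f - pderiv 2 f * X 2 := by
  simp [contactDerivation_apply, totalDerivative_apply, pderiv_X]

theorem contactDerivation_X_two (f : MvPolynomial (Fin 3) R) :
    contactDerivation R f (X 2) = totalDerivative R f := by
  simp [contactDerivation_apply, totalDerivative_apply, pderiv_X]

theorem contactDerivation_injective : Function.Injective (contactDerivation R) := by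
  have generatingFunction_eq (f : MvPolynomial (Fin 3) R) :
      contactDerivation R f (X 1) - X 2 * contactDerivation R f (X 0) = f := by
    rw [contactDerivation_X_zero, contactDerivation_X_one]
    ring
  intro f g h
  rw [← generatingFunction_eq f, h, generatingFunction_eq g]

theorem lie_contactDerivation (f g : MvPolynomial (Fin 3) R) :
    ⁅contactDerivation R f, contactDerivation R g⁆ =
      contactDerivation R (lagrangeBracket R f g) := by
  refine derivation_ext fun i => ?_
  fin_cases i <;>
    simp only [Fin.zero_eta, Fin.mk_one, Fin.reduceFinMk, Derivation.commutator_apply,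
      contactDerivation_X_zero, contactDerivation_X_one, contactDerivation_X_two] <;>
    simp only [contactDerivation_apply, lagrangeBracket_apply, map_add, map_sub, map_neg,
      Derivation.leibniz, smul_eq_mul, totalDerivative_X_two, pderiv_X_self,
      pderiv_X_of_ne (R := R) (show (2 : Fin 3) ≠ 1 by decide),
      pderiv_one_totalDerivative, pderiv_two_totalDerivative, pderiv_comm (σ := Fin 3) 1 2] <;>
    ring

variable (R) in
/-- The contact vector field with generating function `f`, as a vector field on `R³`. -/
noncomputable def contactVectorField :
    MvPolynomial (Fin 3) R →ₗ[R] (Fin 3 → R) → Fin 3 → R :=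
  vectorFieldOfDerivation ∘ₗ contactDerivation R

theorem contactVectorField_apply (f : MvPolynomial (Fin 3) R) (x : Fin 3 → R) :
    contactVectorField R f x =
      ![-eval x (pderiv 2 f), eval x f - eval x (pderiv 2 f) * x 2,
        eval x (pderiv 0 f) + x 2 * eval x (pderiv 1 f)] := by
  ext i
  fin_cases i <;>
    simp [contactVectorField, vectorFieldOfDerivation_apply, contactDerivation_X_zero,
      contactDerivation_X_one, contactDerivation_X_two, totalDerivative_apply]

theorem contactVectorField_injective [IsDomain R] [Infinite R] :
    Function.Injective (contactVectorField R) :=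
  vectorFieldOfDerivation_injective.comp contactDerivation_injective

theorem vbracket_contactVectorField (f g : MvPolynomial (Fin 3) ℝ) :
    vbracket (contactVectorField ℝ f) (contactVectorField ℝ g) =
      contactVectorField ℝ (lagrangeBracket ℝ f g) := by
  simp only [contactVectorField, LinearMap.comp_apply, vbracket_vectorFieldOfDerivation,
    lie_contactDerivation]

theorem two_mul_lagrangeBracket_mul_mul (a b c d : MvPolynomial (Fin 3) R) :
    2 * lagrangeBracket R (a * b) (c * d) =
      a * c * halfWeightBracket R b d + a * d * halfWeightBracket R b c
        + b * c * halfWeightBracket R a d + b * d * halfWeightBracket R a c := by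
  simp only [lagrangeBracket_apply, halfWeightBracket_apply, Derivation.leibniz, smul_eq_mul]
  ring

theorem map₂_lagrangeBracket_mul_self_le (h2 : IsUnit (2 : R))
    {W : Submodule R (MvPolynomial (Fin 3) R)} (hW : Submodule.map₂ (halfWeightBracket R) W W ≤ 1) :
    Submodule.map₂ (lagrangeBracket R) (W * W) (W * W) ≤ W * W := by
  have mul_halfWeightBracket_mem {a b c d : MvPolynomial (Fin 3) R} (ha : a ∈ W) (hb : b ∈ W)
      (hc : c ∈ W) (hd : d ∈ W) : a * b * halfWeightBracket R c d ∈ W * W := by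
    rw [← mul_one (W * W)]
    exact Submodule.mul_mem_mul (Submodule.mul_mem_mul ha hb)
      (hW (Submodule.apply_mem_map₂ _ hc hd))
  rw [Submodule.mul_eq_span_mul_set, Submodule.map₂_span_span, Submodule.span_le]
  rintro _ ⟨_, ⟨a, ha, b, hb, rfl⟩, _, ⟨c, hc, d, hd, rfl⟩, rfl⟩
  rw [← Submodule.mul_eq_span_mul_set, SetLike.mem_coe, ← Submodule.smul_mem_iff_of_isUnit _ h2,
    ofNat_smul_eq_nsmul, nsmul_eq_mul, Nat.cast_ofNat, two_mul_lagrangeBracket_mul_mul]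
  exact add_mem (add_mem (add_mem (mul_halfWeightBracket_mem ha hc hb hd)
    (mul_halfWeightBracket_mem ha hd hb hc)) (mul_halfWeightBracket_mem hb hc ha hd))
    (mul_halfWeightBracket_mem hb hd ha hc)

variable (R) in
/-- The functions `1, t, p, 2u - tp`: homogeneous coordinates of the projective space in which
`ℝ³` is a chart and the distribution `du = p dt` is induced by a symplectic form on `ℝ⁴`. -/
noncomputable def homogeneousCoord : Fin 4 → MvPolynomial (Fin 3) R :=
  ![1, X 0, X 2, 2 * X 1 - X 0 * X 2]

theorem halfWeightBracket_homogeneousCoord (i j : Fin 4) :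
    halfWeightBracket R (homogeneousCoord R i) (homogeneousCoord R j) =
      C ((!![0, 0, 0, 2; 0, 0, 2, 0; 0, -2, 0, 0; -2, 0, 0, 0] : Matrix _ _ R) i j) := by
  fin_cases i <;> fin_cases j <;>
    simp [homogeneousCoord, halfWeightBracket_apply, totalDerivative_apply, pderiv_X,
      pderiv_ofNat, map_ofNat C] <;> ring

theorem map₂_halfWeightBracket_span_homogeneousCoord_le :
    Submodule.map₂ (halfWeightBracket R) (Submodule.span R (Set.range (homogeneousCoord R)))
      (Submodule.span R (Set.range (homogeneousCoord R))) ≤ 1 := by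
  rw [Submodule.map₂_span_span, Submodule.span_le]
  rintro _ ⟨_, ⟨i, rfl⟩, _, ⟨j, rfl⟩, rfl⟩
  exact Submodule.mem_one.2 ⟨_, (halfWeightBracket_homogeneousCoord i j).symm⟩

end ContactFields

/-- The generating functions of the ten contact symmetries, in the order of `stmt11`. -/
noncomputable def symmetryGenerator : Fin 10 → MvPolynomial (Fin 3) ℝ :=
  ![-X 2,
    1,
    -(X 0 * X 2),
    X 0,
    X 0 ^ 2,
    X 1,
    -X 2 ^ 2,
    X 0 * (2 * X 1 - X 0 * X 2),
    X 2 * (2 * X 1 - X 0 * X 2),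
    -(2 * X 1 - X 0 * X 2) ^ 2]

theorem linearIndependent_symmetryGenerator : LinearIndependent ℝ symmetryGenerator := by
  rw [Fintype.linearIndependent_iff]
  intro a ha
  have eval_sum_eq_zero (t u p : ℝ) :
      -a 0 * p + a 1 - a 2 * (t * p) + a 3 * t + a 4 * t ^ 2 + a 5 * u - a 6 * p ^ 2
        + (a 7 * t + a 8 * p) * (2 * u - t * p) - a 9 * (2 * u - t * p) ^ 2 = 0 := by
    have eval_ha := congrArg (eval ![t, u, p]) ha
    simp [symmetryGenerator, Fin.sum_univ_succ] at eval_ha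
    linarith
  -- The generating functions are linearly independent already as functions on these ten points.
  have := eval_sum_eq_zero 0 0 0
  have := eval_sum_eq_zero 1 0 0
  have := eval_sum_eq_zero (-1) 0 0
  have := eval_sum_eq_zero 0 1 0
  have := eval_sum_eq_zero 0 (-1) 0
  have := eval_sum_eq_zero 0 0 1
  have := eval_sum_eq_zero 0 0 (-1)
  have := eval_sum_eq_zero 1 1 0
  have := eval_sum_eq_zero 0 1 1
  have := eval_sum_eq_zero 1 0 1
  intro i
  fin_cases i <;> simp only [Fin.zero_eta, Fin.mk_one, Fin.reduceFinMk] <;> linarith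

theorem homogeneousCoord_mul_homogeneousCoord (i j : Fin 4) :
    let h := symmetryGenerator
    homogeneousCoord ℝ i * homogeneousCoord ℝ j =
      !![h 1, h 3, -h 0, h 2 + 2 • h 5;
        h 3, h 4, -h 2, h 7;
        -h 0, -h 2, -h 6, h 8;
        h 2 + 2 • h 5, h 7, h 8, -h 9] i j := by
  fin_cases i <;> fin_cases j <;> simp [homogeneousCoord, symmetryGenerator] <;> ring

theorem symmetryGenerator_eq_homogeneousCoord_mul :
    let z := homogeneousCoord ℝ
    symmetryGenerator =
      ![-(z 0 * z 2), z 0 * z 0, -(z 1 * z 2), z 0 * z 1, z 1 * z 1,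
        (1 / 2 : ℝ) • (z 0 * z 3 + z 1 * z 2), -(z 2 * z 2), z 1 * z 3, z 2 * z 3,
        -(z 3 * z 3)] := by
  refine funext fun k => MvPolynomial.funext fun x => ?_
  fin_cases k <;> simp [homogeneousCoord, symmetryGenerator, smul_eval] <;> ring

theorem span_symmetryGenerator :
    Submodule.span ℝ (Set.range symmetryGenerator) =
      Submodule.span ℝ (Set.range (homogeneousCoord ℝ))
        * Submodule.span ℝ (Set.range (homogeneousCoord ℝ)) := by
  apply le_antisymm
  · have product_mem (i j : Fin 4) : homogeneousCoord ℝ i * homogeneousCoord ℝ j ∈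
        Submodule.span ℝ (Set.range (homogeneousCoord ℝ))
          * Submodule.span ℝ (Set.range (homogeneousCoord ℝ)) :=
      Submodule.mul_mem_mul (Submodule.subset_span ⟨i, rfl⟩) (Submodule.subset_span ⟨j, rfl⟩)
    rw [Submodule.span_le, symmetryGenerator_eq_homogeneousCoord_mul]
    rintro _ ⟨k, rfl⟩
    fin_cases k <;> simp [product_mem, add_mem]
  · have generator_mem (k : Fin 10) :
        symmetryGenerator k ∈ Submodule.span ℝ (Set.range symmetryGenerator) :=
      Submodule.subset_span ⟨k, rfl⟩
    rw [Submodule.span_mul_span, Submodule.span_le]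
    rintro _ ⟨_, ⟨i, rfl⟩, _, ⟨j, rfl⟩, rfl⟩
    simp only [homogeneousCoord_mul_homogeneousCoord]
    fin_cases i <;> fin_cases j <;>
      simp [generator_mem, add_mem, nsmul_mem, -nsmul_eq_mul]

/-- The 10 vector fields on `ℝ³` with coordinates `(t, u, p) = (x 0, x 1, x 2)`:
`∂_t; ∂_u; t∂_t − p∂_p; t∂_u + ∂_p; t²∂_u + 2t∂_p; u∂_u + p∂_p; 2p∂_t + p²∂_u;
t²∂_t + 2tu∂_u + 2u∂_p; (2tp − 2u)∂_t + tp²∂_u + p²∂_p;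
(2t²p − 4tu)∂_t + (t²p² − 4u²)∂_u + (2tp² − 4up)∂_p`
are linearly independent and span a 10-dimensional Lie algebra of vector fields. -/
theorem stmt11
    (V : Fin 10 → ((Fin 3 → ℝ) → (Fin 3 → ℝ)))
    (hV : V = ![fun _ => ![1, 0, 0],
                fun _ => ![0, 1, 0],
                fun x => ![x 0, 0, -x 2],
                fun x => ![0, x 0, 1],
                fun x => ![0, (x 0) ^ 2, 2 * x 0],
                fun x => ![0, x 1, x 2],
                fun x => ![2 * x 2, (x 2) ^ 2, 0],
                fun x => ![(x 0) ^ 2, 2 * x 0 * x 1, 2 * x 1],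
                fun x => ![2 * x 0 * x 2 - 2 * x 1, x 0 * (x 2) ^ 2, (x 2) ^ 2],
                fun x => ![2 * (x 0) ^ 2 * x 2 - 4 * x 0 * x 1,
                           (x 0) ^ 2 * (x 2) ^ 2 - 4 * (x 1) ^ 2,
                           2 * x 0 * (x 2) ^ 2 - 4 * x 1 * x 2]]) :
    LinearIndependent ℝ V ∧
    (∀ X ∈ Submodule.span ℝ (Set.range V), ∀ Y ∈ Submodule.span ℝ (Set.range V),
      vbracket X Y ∈ Submodule.span ℝ (Set.range V)) ∧
    Module.finrank ℝ (Submodule.span ℝ (Set.range V)) = 10 := by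
  have V_eq : V = contactVectorField ℝ ∘ symmetryGenerator := by
    subst hV
    ext k x i
    rw [Function.comp_apply, contactVectorField_apply]
    fin_cases k <;> fin_cases i <;> simp [symmetryGenerator, pderiv_X, pderiv_ofNat] <;> ring
  have span_eq : Submodule.span ℝ (Set.range V) =
      (Submodule.span ℝ (Set.range symmetryGenerator)).map (contactVectorField ℝ) := by
    rw [V_eq, Set.range_comp, Submodule.map_span]
  have V_independent : LinearIndependent ℝ V := by
    rw [V_eq]
    exact linearIndependent_symmetryGenerator.map' _
      (LinearMap.ker_eq_bot.2 contactVectorField_injective)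
  refine ⟨V_independent, ?_, by simpa using finrank_span_eq_card V_independent⟩
  rw [span_eq, span_symmetryGenerator]
  rintro _ ⟨f, hf, rfl⟩ _ ⟨g, hg, rfl⟩
  rw [vbracket_contactVectorField]
  exact Submodule.mem_map_of_mem (map₂_lagrangeBracket_mul_self_le (IsUnit.mk0 2 two_ne_zero)
    map₂_halfWeightBracket_span_homogeneousCoord_le (Submodule.apply_mem_map₂ _ hf hg))
end

section
/- Let n ≥ 3 be an integer. On ℝ² with coordinates (t,u), consider the n + 1 smooth vector fields ∂_t, ∂_u, t∂_u, t²∂_u, …, t^{n−2}∂_u, and t∂_t + (n−3)u∂_u. These vector fields are linearly independent over ℝ and their real span is closed under the Lie bracket of vector fields; hence they span an (n+1)-dimensional Lie subalgebra of the Lie algebra of smooth vector fields on ℝ². -/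
/-
Fix `c` (here `n - 3`) and `m` (here `n - 1`). The vector fields
`(a + b t) ∂_t + (q(t) + b c u) ∂_u` with `deg q < m` depend linearly and injectively on the triple
`(a, q, b)`, and the listed fields are the images of the basis `(1, 0, 0), (0, t ^ i, 0), (0, 0, 1)`
of the space of triples. In the bracket of two such fields the linear coefficient cancels, and the
polynomial part is a combination of the two polynomials, their derivatives, and `t` times these
derivatives, so that its degree stays below `m`.
-/

section

open Module Polynomial

/-- The vector field `(a + b t) ∂_t + (q(t) + b c u) ∂_u` on the plane with coordinates
`t = p 0` and `u = p 1`, as a linear function of the triple `(a, q, b)`. -/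
noncomputable def affineField (c : ℝ) :
    ℝ × ℝ[X] × ℝ →ₗ[ℝ] ((Fin 2 → ℝ) → (Fin 2 → ℝ)) where
  toFun x p := ![x.1 + x.2.2 * p 0, x.2.1.eval (p 0) + x.2.2 * (c * p 1)]
  map_add' x y := by
    funext p i
    fin_cases i <;> simp <;> ring
  map_smul' r x := by
    funext p i
    fin_cases i <;> simp <;> ring

theorem affineField_apply (c a b : ℝ) (q : ℝ[X]) (p : Fin 2 → ℝ) :
    affineField c (a, q, b) p = ![a + b * p 0, q.eval (p 0) + b * (c * p 1)] := rfl

theorem affineField_injective (c : ℝ) : Function.Injective (affineField c) := by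
  rw [injective_iff_map_eq_zero]
  rintro ⟨a, q, b⟩ h
  have eq_zero_at (p : Fin 2 → ℝ) : a + b * p 0 = 0 ∧ q.eval (p 0) + b * (c * p 1) = 0 := by
    simpa [affineField_apply] using congrFun h p
  have ha : a = 0 := by simpa using (eq_zero_at 0).1
  have hb : b = 0 := by simpa [ha] using (eq_zero_at 1).1
  have hq : q = 0 := Polynomial.funext fun t => by simpa [hb] using (eq_zero_at ![t, 0]).2
  rw [ha, hb, hq, Prod.mk_zero_zero, Prod.mk_zero_zero]

theorem fderiv_affineField (c a b : ℝ) (q : ℝ[X]) (p v : Fin 2 → ℝ) :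
    fderiv ℝ (affineField c (a, q, b)) p v =
      ![b * v 0, q.derivative.eval (p 0) * v 0 + b * (c * v 1)] := by
  have ht : HasFDerivAt (fun p : Fin 2 → ℝ => p 0) (.proj 0 : (Fin 2 → ℝ) →L[ℝ] ℝ) p :=
    hasFDerivAt_apply 0 p
  have hu : HasFDerivAt (fun p : Fin 2 → ℝ => p 1) (.proj 1 : (Fin 2 → ℝ) →L[ℝ] ℝ) p :=
    hasFDerivAt_apply 1 p
  have h : HasFDerivAt (affineField c (a, q, b)) (ContinuousLinearMap.pi
      (![b • .proj 0, q.derivative.eval (p 0) • .proj 0 + b • c • .proj 1] :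
        Fin 2 → (Fin 2 → ℝ) →L[ℝ] ℝ)) p := by
    refine hasFDerivAt_pi.2 fun i => ?_
    fin_cases i
    · exact (ht.const_mul b).const_add a
    · exact ((q.hasDerivAt (p 0)).comp_hasFDerivAt p ht).add ((hu.const_mul c).const_mul b)
  rw [h.fderiv]
  funext i
  fin_cases i <;> simp

theorem vbracket_affineField (c a b a' b' : ℝ) (q q' : ℝ[X]) :
    vbracket (affineField c (a, q, b)) (affineField c (a', q', b')) =
      affineField c (a * b' - a' * b,
        (C a + C b * X) * derivative q' - (C a' + C b' * X) * derivative q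
          + c • (b' • q - b • q'), 0) := by
  funext p i
  simp only [vbracket, fderiv_affineField, affineField_apply]
  fin_cases i <;> simp <;> ring

theorem C_add_C_mul_X_mul_derivative_mem_degreeLT {R : Type*} [Semiring R] {m : ℕ} (a b : R)
    {q : R[X]} (hq : q ∈ degreeLT R m) : (C a + C b * X) * derivative q ∈ degreeLT R m := by
  rw [mem_degreeLT, degree_lt_iff_coeff_zero] at hq ⊢
  intro k hk
  have coeff_derivative_eq_zero : (derivative q).coeff k = 0 := by
    rw [coeff_derivative, hq (k + 1) (by omega), zero_mul]
  cases k with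
  | zero => simp [add_mul, mul_assoc, coeff_derivative_eq_zero]
  | succ k => simp [add_mul, mul_assoc, coeff_derivative_eq_zero, coeff_derivative, hq (k + 1) hk]

/-- The restriction of `affineField c` to triples `(a, q, b)` with `q` of degree less than `m`.
Its range is the span of the listed fields when `c = n - 3` and `m = n - 1`. -/
noncomputable def affineFieldLT (c : ℝ) (m : ℕ) :
    ℝ × degreeLT ℝ m × ℝ →ₗ[ℝ] ((Fin 2 → ℝ) → (Fin 2 → ℝ)) :=
  affineField c ∘ₗ LinearMap.id.prodMap ((degreeLT ℝ m).subtype.prodMap LinearMap.id)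

theorem affineFieldLT_apply (c : ℝ) (m : ℕ) (a b : ℝ) (q : degreeLT ℝ m) :
    affineFieldLT c m (a, q, b) = affineField c (a, q, b) := rfl

theorem affineFieldLT_injective (c : ℝ) (m : ℕ) : Function.Injective (affineFieldLT c m) :=
  (affineField_injective c).comp <|
    Function.injective_id.prodMap (Subtype.val_injective.prodMap Function.injective_id)

theorem vbracket_mem_range_affineFieldLT {c : ℝ} {m : ℕ} {V W : (Fin 2 → ℝ) → (Fin 2 → ℝ)}
    (hV : V ∈ LinearMap.range (affineFieldLT c m)) (hW : W ∈ LinearMap.range (affineFieldLT c m)) :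
    vbracket V W ∈ LinearMap.range (affineFieldLT c m) := by
  obtain ⟨⟨a, ⟨q, hq⟩, b⟩, rfl⟩ := hV
  obtain ⟨⟨a', ⟨q', hq'⟩, b'⟩, rfl⟩ := hW
  rw [affineFieldLT_apply, affineFieldLT_apply, vbracket_affineField]
  refine ⟨(_, ⟨_, add_mem (sub_mem ?_ ?_) ?_⟩, _), rfl⟩
  · exact C_add_C_mul_X_mul_derivative_mem_degreeLT a b hq'
  · exact C_add_C_mul_X_mul_derivative_mem_degreeLT a' b' hq
  · exact Submodule.smul_mem _ c
      (sub_mem (Submodule.smul_mem _ b' hq) (Submodule.smul_mem _ b hq'))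

/-- The bijection `Fin 1 ⊕ (Fin m ⊕ Fin 1) ≃ Fin (m + 2)` listing the summands in order, used to
index a basis of triples by an initial segment of `ℕ`. -/
def finOneSumSumEquiv (m : ℕ) : Fin 1 ⊕ (Fin m ⊕ Fin 1) ≃ Fin (m + 1 + 1) :=
  ((Equiv.refl (Fin 1)).sumCongr finSumFinEquiv).trans
    (finSumFinEquiv.trans (finCongr (Nat.add_comm 1 (m + 1))))

/-- The basis `(1, 0, 0), (0, X ^ 0, 0), …, (0, X ^ (m - 1), 0), (0, 0, 1)` of the space of triples
parametrising `affineFieldLT`, in this order. -/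
noncomputable def degreeLTTripleBasis (R : Type*) [Semiring R] (m : ℕ) :
    Basis (Fin (m + 1 + 1)) R (R × degreeLT R m × R) :=
  ((Basis.singleton (Fin 1) R).prod
    ((degreeLT.basis R m).prod (Basis.singleton (Fin 1) R))).reindex (finOneSumSumEquiv m)

theorem degreeLTTripleBasis_zero (R : Type*) [Semiring R] (m : ℕ) :
    degreeLTTripleBasis R m 0 = (1, 0, 0) := by
  have index_eq : (0 : Fin (m + 1 + 1)) = finOneSumSumEquiv m (.inl 0) := by
    ext
    simp [finOneSumSumEquiv]
  rw [index_eq, degreeLTTripleBasis, Basis.reindex_apply, Equiv.symm_apply_apply,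
    Basis.prod_apply, Sum.elim_inl, Function.comp_apply, Basis.singleton_apply, LinearMap.inl_apply,
    Prod.mk_zero_zero]

theorem degreeLTTripleBasis_last (R : Type*) [Semiring R] (m : ℕ) :
    degreeLTTripleBasis R m (Fin.last (m + 1)) = (0, 0, 1) := by
  have index_eq : Fin.last (m + 1) = finOneSumSumEquiv m (.inr (.inr 0)) := by
    ext
    simp [finOneSumSumEquiv]
  rw [index_eq, degreeLTTripleBasis, Basis.reindex_apply, Equiv.symm_apply_apply,
    Basis.prod_apply]
  simp [Basis.prod_apply]

theorem degreeLTTripleBasis_succ_castSucc (R : Type*) [Semiring R] {m : ℕ} (i : Fin m) :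
    degreeLTTripleBasis R m i.castSucc.succ = (0, degreeLT.basis R m i, 0) := by
  have index_eq : i.castSucc.succ = finOneSumSumEquiv m (.inr (.inl i)) := by
    ext
    simp [finOneSumSumEquiv]
  rw [index_eq, degreeLTTripleBasis, Basis.reindex_apply, Equiv.symm_apply_apply,
    Basis.prod_apply]
  simp [Basis.prod_apply]

theorem eq_affineFieldLT_comp_degreeLTTripleBasis {c : ℝ} {m : ℕ}
    {V : Fin (m + 1 + 1) → ((Fin 2 → ℝ) → (Fin 2 → ℝ))}
    (hV : ∀ i : Fin (m + 1 + 1), V i = fun p =>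
      if (i : ℕ) = 0 then ![1, 0]
      else if (i : ℕ) = m + 1 then ![p 0, c * p 1]
      else ![0, (p 0) ^ ((i : ℕ) - 1)]) :
    V = affineFieldLT c m ∘ degreeLTTripleBasis ℝ m := by
  funext i p
  rw [hV, Function.comp_apply]
  induction i using Fin.cases with
  | zero => simp [degreeLTTripleBasis_zero, affineFieldLT_apply, affineField_apply]
  | succ j =>
    induction j using Fin.lastCases with
    | last => simp [degreeLTTripleBasis_last, affineFieldLT_apply, affineField_apply]
    | cast k =>
      simp [degreeLTTripleBasis_succ_castSucc, affineFieldLT_apply, affineField_apply, k.isLt.ne]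

end

theorem stmt12_general (n : ℕ) (hn : 1 ≤ n) (c : ℝ)
    (V : Fin (n + 1) → ((Fin 2 → ℝ) → (Fin 2 → ℝ)))
    (hV : ∀ i : Fin (n + 1), V i = fun p =>
      if (i : ℕ) = 0 then ![1, 0]
      else if (i : ℕ) = n then ![p 0, c * p 1]
      else ![0, (p 0) ^ ((i : ℕ) - 1)]) :
    LinearIndependent ℝ V ∧
    (∀ X ∈ Submodule.span ℝ (Set.range V), ∀ Y ∈ Submodule.span ℝ (Set.range V),
      vbracket X Y ∈ Submodule.span ℝ (Set.range V)) ∧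
    Module.finrank ℝ (Submodule.span ℝ (Set.range V)) = n + 1 := by
  obtain ⟨m, rfl⟩ := Nat.exists_eq_add_of_le' hn
  obtain rfl := eq_affineFieldLT_comp_degreeLTTripleBasis hV
  have linearIndependent : LinearIndependent ℝ (affineFieldLT c m ∘ degreeLTTripleBasis ℝ m) :=
    (degreeLTTripleBasis ℝ m).linearIndependent.map_injOn _ (affineFieldLT_injective c m).injOn
  have span_eq_range : Submodule.span ℝ (Set.range (affineFieldLT c m ∘ degreeLTTripleBasis ℝ m)) =
      LinearMap.range (affineFieldLT c m) := by
    rw [Set.range_comp, Submodule.span_image, Module.Basis.span_eq, Submodule.map_top]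
  refine ⟨linearIndependent, fun X hX Y hY => ?_, ?_⟩
  · rw [span_eq_range] at hX hY ⊢
    exact vbracket_mem_range_affineFieldLT hX hY
  · rw [finrank_span_eq_card linearIndependent, Fintype.card_fin]

/-- The `n+1` vector fields `∂_t, ∂_u, t∂_u, …, t^{n−2}∂_u, t∂_t + (n−3)u∂_u` on `ℝ²`
are linearly independent and span an `(n+1)`-dimensional Lie algebra of vector fields. -/
theorem stmt12 (n : ℕ) (hn : 3 ≤ n)
    (V : Fin (n + 1) → ((Fin 2 → ℝ) → (Fin 2 → ℝ)))
    (hV : ∀ i : Fin (n + 1), V i = fun p =>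
      if (i : ℕ) = 0 then ![1, 0]
      else if (i : ℕ) = n then ![p 0, ((n : ℝ) - 3) * p 1]
      else ![0, (p 0) ^ ((i : ℕ) - 1)]) :
    LinearIndependent ℝ V ∧
    (∀ X ∈ Submodule.span ℝ (Set.range V), ∀ Y ∈ Submodule.span ℝ (Set.range V),
      vbracket X Y ∈ Submodule.span ℝ (Set.range V)) ∧
    Module.finrank ℝ (Submodule.span ℝ (Set.range V)) = n + 1 :=
  stmt12_general n (by omega) ((n : ℝ) - 3) V hV
end
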